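/- arXiv:2408.06392 — 2 statements merged into one kernel-verified Lean document; each statement's English description precedes it below -/
import Mathlib

section
/- Let f be an almost embedding of K₅ − 45 (the complete graph on {1,…,5} with the edge {4,5} removed) in the plane. Then w_f(123, 4) − w_f(123, 5) is an odd integer, where w_f(123, l) := w'(p₁₂, f_l) + w'(p₂₃, f_l) + w'(p₃₁, f_l). -/
/-- Sum of the oriented angles ∠A₁OA₂ + ∠A₂OA₃ + ⋯ + ∠A_{m−1}OA_m at `O`
along a polygonal line given as a list of points in the plane `ℂ`,
where ∠AOB := Complex.arg ((B − O)/(A − O)) ∈ (−π, π]. -/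
noncomputable def angSum (O : ℂ) : List ℂ → ℝ
  | a :: b :: rest => Complex.arg ((b - O) / (a - O)) + angSum O (b :: rest)
  | _ => 0

/-- `w'(A₁…A_m, O)`: the (non-closed) winding number of a polygonal line around `O`,
i.e. `(∠A₁OA₂ + ⋯ + ∠A_{m−1}OA_m) / (2π)`. -/
noncomputable def wp (O : ℂ) (l : List ℂ) : ℝ := angSum O l / (2 * Real.pi)

/-- `w(A₁…A_m, O)`: the winding number of the closed polygonal line `A₁…A_m` around `O`,
i.e. `(∠A₁OA₂ + ⋯ + ∠A_{m−1}OA_m + ∠A_mOA₁) / (2π)`. -/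
noncomputable def wcl (O : ℂ) (l : List ℂ) : ℝ := wp O (l ++ [l.headI])

/-- The image of a polygonal line: the union of the segments between consecutive points. -/
def imagePL : List ℂ → Set ℂ
  | [] => ∅
  | [a] => {a}
  | a :: b :: rest => segment ℝ a b ∪ imagePL (b :: rest)

/-- Edges of `K₅ − 45`: all pairs of distinct vertices except `{4,5}`
(vertices `1,…,5` are encoded as `0,…,4 : Fin 5`, so the removed edge is `{3,4}`). -/
def IsEdgeK5m45 (i j : Fin 5) : Prop := i ≠ j ∧ ¬(i = 3 ∧ j = 4) ∧ ¬(i = 4 ∧ j = 3)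


theorem aux_arg_div {u x y : ℂ} (hx : 0 < (u * x).re) (hy : 0 < (u * y).re) :
    Complex.arg (y / x) = Complex.arg (u * y) - Complex.arg (u * x) := by
  have hux : u * x ≠ 0 := by
    intro h
    rw [h] at hx
    simp at hx
  have huy : u * y ≠ 0 := by
    intro h
    rw [h] at hy
    simp at hy
  have hu : u ≠ 0 := left_ne_zero_of_mul hux
  have e : y / x = (u * y) / (u * x) := (mul_div_mul_left y x hu).symm
  have h1 := Complex.arg_div_coe_angle huy hux
  rw [← Real.Angle.coe_sub] at h1
  have h2 := abs_lt.1 (Complex.abs_arg_lt_pi_div_two_iff.2 (Or.inl hx))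
  have h3 := abs_lt.1 (Complex.abs_arg_lt_pi_div_two_iff.2 (Or.inl hy))
  have h4 := congrArg Real.Angle.toReal h1
  rw [Complex.arg_coe_angle_toReal_eq_arg, Real.Angle.toReal_coe_eq_self_iff.2
    ⟨by linarith [h2.2, h3.1], by linarith [h2.1, h3.2]⟩] at h4
  rw [e, h4]

theorem aux_seg (A B C D : ℂ) (h : Disjoint (segment ℝ A B) (segment ℝ C D)) :
    Complex.arg ((D - B) / (C - B)) - Complex.arg ((D - A) / (C - A)) =
      Complex.arg ((B - D) / (A - D)) - Complex.arg ((B - C) / (A - C)) := by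
  have hc : ∀ x y : ℂ, IsCompact (segment ℝ x y) := fun x y => by
    rw [segment_eq_image]
    exact isCompact_Icc.image (by fun_prop)
  obtain ⟨g, r, s, hA, hrs, hC⟩ := geometric_hahn_banach_compact_closed
    (convex_segment A B) (hc A B) (convex_segment C D) (hc C D).isClosed h
  have hg : ∀ z : ℂ, g z = ((⟨g 1, -g Complex.I⟩ : ℂ) * z).re := by
    intro z
    have : z = z.re • (1 : ℂ) + z.im • Complex.I := by
      simp [Complex.re_add_im]
    conv_lhs => rw [this]
    rw [map_add, map_smul, map_smul]
    simp
    ring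
  have a1 := hA A (left_mem_segment ℝ A B)
  have a2 := hA B (right_mem_segment ℝ A B)
  have a3 := hC C (left_mem_segment ℝ C D)
  have a4 := hC D (right_mem_segment ℝ C D)
  generalize (⟨g 1, -g Complex.I⟩ : ℂ) = u at hg
  have p1 : 0 < (u * (C - A)).re := by rw [← hg, map_sub]; linarith
  have p2 : 0 < (u * (D - A)).re := by rw [← hg, map_sub]; linarith
  have p3 : 0 < (u * (C - B)).re := by rw [← hg, map_sub]; linarith
  have p4 : 0 < (u * (D - B)).re := by rw [← hg, map_sub]; linarith
  have e1 : (B - D) / (A - D) = (D - B) / (D - A) := by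
    rw [← neg_sub D B, ← neg_sub D A, neg_div_neg_eq]
  have e2 : (B - C) / (A - C) = (C - B) / (C - A) := by
    rw [← neg_sub C B, ← neg_sub C A, neg_div_neg_eq]
  rw [e1, e2, aux_arg_div p3 p4, aux_arg_div p1 p2, aux_arg_div p2 p4, aux_arg_div p1 p3]
  ring

theorem aux_head_mem (a : ℂ) (l : List ℂ) : a ∈ imagePL (a :: l) := by
  cases l with
  | nil => simp [imagePL]
  | cons b l => exact Or.inl (left_mem_segment ℝ a b)

theorem aux_seg_list (A B : ℂ) (τ : List ℂ) : ∀ C : ℂ,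
    Disjoint (segment ℝ A B) (imagePL (C :: τ)) →
    angSum B (C :: τ) - angSum A (C :: τ) =
      Complex.arg ((B - (C :: τ).getLast (List.cons_ne_nil _ _)) /
        (A - (C :: τ).getLast (List.cons_ne_nil _ _))) -
      Complex.arg ((B - C) / (A - C)) := by
  induction τ with
  | nil => intro C _; simp [angSum]
  | cons D τ ih =>
    intro C h
    simp only [imagePL, Set.disjoint_union_right] at h
    have h1 := aux_seg A B C D h.1
    have h2 := ih D h.2
    rw [List.getLast_cons (List.cons_ne_nil _ _)]
    simp only [angSum] at h2 ⊢
    linarith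

theorem aux_list_list (τ : List ℂ) (C : ℂ) (σ : List ℂ) : ∀ A : ℂ,
    Disjoint (imagePL (A :: σ)) (imagePL (C :: τ)) →
    angSum ((A :: σ).getLast (List.cons_ne_nil _ _)) (C :: τ) - angSum A (C :: τ) =
      angSum ((C :: τ).getLast (List.cons_ne_nil _ _)) (A :: σ) - angSum C (A :: σ) := by
  induction σ with
  | nil => intro A _; simp [angSum]
  | cons B σ ih =>
    intro A h
    simp only [imagePL, Set.disjoint_union_left] at h
    have h1 := aux_seg_list A B τ C h.1
    have h2 := ih B h.2
    rw [List.getLast_cons (List.cons_ne_nil B σ)]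
    simp only [angSum] at h2 ⊢
    linarith

theorem aux_wp {σ τ : List ℂ} {A B C D : ℂ} (hσ : σ ≠ []) (hτ : τ ≠ [])
    (hA : σ.headI = A) (hB : σ.getLast hσ = B) (hC : τ.headI = C) (hD : τ.getLast hτ = D)
    (h : Disjoint (imagePL σ) (imagePL τ)) :
    wp B τ - wp A τ = wp D σ - wp C σ := by
  obtain ⟨a, σ, rfl⟩ := List.exists_cons_of_ne_nil hσ
  obtain ⟨c, τ, rfl⟩ := List.exists_cons_of_ne_nil hτ
  have := aux_list_list τ c σ a h
  simp only [List.headI] at hA hC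
  rw [hB, hD, hA, hC] at this
  subst hA hC
  simp only [wp, ← sub_div, this]

theorem aux_int_list (O : ℂ) (l : List ℂ) : ∀ a : ℂ, O ∉ imagePL (a :: l) →
    ∃ n : ℤ, angSum O (a :: l) =
      Complex.arg ((a :: l).getLast (List.cons_ne_nil _ _) - O) - Complex.arg (a - O)
        + 2 * Real.pi * n := by
  induction l with
  | nil => intro a _; exact ⟨0, by simp [angSum]⟩
  | cons b l ih =>
    intro a h
    have ha : a - O ≠ 0 := sub_ne_zero.2 (by rintro rfl; exact h (aux_head_mem _ _))
    simp only [imagePL, Set.mem_union, not_or] at h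
    have hb : b - O ≠ 0 := sub_ne_zero.2 (by rintro rfl; exact h.2 (aux_head_mem _ _))
    obtain ⟨n, hn⟩ := ih b h.2
    have h1 := Complex.arg_div_coe_angle hb ha
    rw [← Real.Angle.coe_sub, Real.Angle.angle_eq_iff_two_pi_dvd_sub] at h1
    obtain ⟨m, hm⟩ := h1
    refine ⟨n + m, ?_⟩
    rw [List.getLast_cons (List.cons_ne_nil b l)]
    simp only [angSum] at hn ⊢
    push_cast
    linarith

theorem aux_int {σ : List ℂ} {A B O : ℂ} (hσ : σ ≠ [])
    (hA : σ.headI = A) (hB : σ.getLast hσ = B) (h : O ∉ imagePL σ) :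
    ∃ n : ℤ, wp O σ =
      Complex.arg (B - O) / (2 * Real.pi) - Complex.arg (A - O) / (2 * Real.pi) + n := by
  obtain ⟨a, σ, rfl⟩ := List.exists_cons_of_ne_nil hσ
  obtain ⟨n, hn⟩ := aux_int_list O σ a h
  simp only [List.headI] at hA
  rw [hB] at hn
  subst hA
  refine ⟨n, ?_⟩
  have := Real.pi_pos
  rw [wp, hn]
  field_simp

theorem aux_half {a b : ℂ} (h : a ≠ b) : ∃ e : ℤ,
    Complex.arg (b - a) / (2 * Real.pi) = Complex.arg (a - b) / (2 * Real.pi) + 1 / 2 + e := by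
  have h1 := Complex.arg_neg_coe_angle (sub_ne_zero.2 h)
  rw [neg_sub, ← Real.Angle.coe_add, Real.Angle.angle_eq_iff_two_pi_dvd_sub] at h1
  obtain ⟨m, hm⟩ := h1
  refine ⟨m, ?_⟩
  have := Real.pi_pos
  have h2 : Complex.arg (b - a) = Complex.arg (a - b) + Real.pi + 2 * Real.pi * m := by linarith
  rw [h2]
  field_simp

set_option maxHeartbeats 4000000 in
/-- Let `f` be an almost embedding of `K₅ − 45` in the plane (five
pairwise distinct points, a polygonal line `p i j` joining `f i` to `f j` for each edge
`{i,j}` with `p j i` the reverse of `p i j`, images of non-adjacent edges disjoint, and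
`f l` not on the image of any edge `{i,j}` with `l ∉ {i,j}`). Then
`w_f(123, 4) − w_f(123, 5)` is an odd integer, where
`w_f(123, l) := w'(p₁₂, f l) + w'(p₂₃, f l) + w'(p₃₁, f l)`
(vertices `1,…,5` are encoded as `0,…,4 : Fin 5`). -/
theorem winding_difference_odd_K5_minus_edge (f : Fin 5 → ℂ)
    (p : Fin 5 → Fin 5 → List ℂ)
    (hinj : Function.Injective f)
    (hne : ∀ i j, IsEdgeK5m45 i j → p i j ≠ [])
    (hjoin : ∀ i j, ∀ h : IsEdgeK5m45 i j,
      (p i j).headI = f i ∧ (p i j).getLast (hne i j h) = f j)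
    (hsym : ∀ i j, p j i = (p i j).reverse)
    (hdisj : ∀ i j k l : Fin 5, IsEdgeK5m45 i j → IsEdgeK5m45 k l →
      i ≠ k → i ≠ l → j ≠ k → j ≠ l →
      Disjoint (imagePL (p i j)) (imagePL (p k l)))
    (hvert : ∀ i j l : Fin 5, IsEdgeK5m45 i j → l ≠ i → l ≠ j →
      f l ∉ imagePL (p i j)) :
    ∃ n : ℤ, Odd n ∧
      (wp (f 3) (p 0 1) + wp (f 3) (p 1 2) + wp (f 3) (p 2 0)) -
      (wp (f 4) (p 0 1) + wp (f 4) (p 1 2) + wp (f 4) (p 2 0)) = n := by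
  have key : ∀ i j k l : Fin 5, IsEdgeK5m45 i j → IsEdgeK5m45 k l →
      i ≠ k → i ≠ l → j ≠ k → j ≠ l →
      wp (f j) (p k l) - wp (f i) (p k l) = wp (f l) (p i j) - wp (f k) (p i j) :=
    fun i j k l h1 h2 a b c d => aux_wp (hne i j h1) (hne k l h2) (hjoin i j h1).1
      (hjoin i j h1).2 (hjoin k l h2).1 (hjoin k l h2).2 (hdisj i j k l h1 h2 a b c d)
  obtain ⟨θ, hθ⟩ : ∃ θ : Fin 5 → Fin 5 → ℝ,
      ∀ k i, θ k i = Complex.arg (f i - f k) / (2 * Real.pi) := ⟨_, fun _ _ => rfl⟩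
  have hint : ∀ i j k : Fin 5, IsEdgeK5m45 i j → k ≠ i → k ≠ j →
      ∃ n : ℤ, wp (f k) (p i j) = θ k j - θ k i + n := by
    intro i j k h a b
    rw [hθ, hθ]
    exact aux_int (hne i j h) (hjoin i j h).1 (hjoin i j h).2 (hvert i j k h a b)
  have hhalf : ∀ i j : Fin 5, i ≠ j → ∃ e : ℤ, θ i j = θ j i + 1 / 2 + e := by
    intro i j h
    rw [hθ, hθ]
    exact aux_half (fun e => h (hinj e))
  have hE : ∀ i j : Fin 5, i ≠ j → (i < 3 ∨ j < 3) → IsEdgeK5m45 i j := by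
    unfold IsEdgeK5m45
    decide
  have key2 : ∀ i j k l : Fin 5, i ≠ j → (i < 3 ∨ j < 3) → k ≠ l → (k < 3 ∨ l < 3) →
      i ≠ k → i ≠ l → j ≠ k → j ≠ l →
      wp (f j) (p k l) - wp (f i) (p k l) = wp (f l) (p i j) - wp (f k) (p i j) :=
    fun i j k l h1 h1' h2 h2' => key i j k l (hE i j h1 h1') (hE k l h2 h2')
  have hint2 : ∀ i j k : Fin 5, i ≠ j → (i < 3 ∨ j < 3) → k ≠ i → k ≠ j →
      ∃ n : ℤ, wp (f k) (p i j) = θ k j - θ k i + n :=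
    fun i j k h h' => hint i j k (hE i j h h')
  clear key hint hE hθ hdisj hvert hjoin hne hsym hinj
  obtain ⟨n012, h012⟩ := hint2 0 1 2 (by decide) (by decide) (by decide) (by decide)
  obtain ⟨n013, h013⟩ := hint2 0 1 3 (by decide) (by decide) (by decide) (by decide)
  obtain ⟨n014, h014⟩ := hint2 0 1 4 (by decide) (by decide) (by decide) (by decide)
  obtain ⟨n120, h120⟩ := hint2 1 2 0 (by decide) (by decide) (by decide) (by decide)
  obtain ⟨n123, h123⟩ := hint2 1 2 3 (by decide) (by decide) (by decide) (by decide)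
  obtain ⟨n124, h124⟩ := hint2 1 2 4 (by decide) (by decide) (by decide) (by decide)
  obtain ⟨n201, h201⟩ := hint2 2 0 1 (by decide) (by decide) (by decide) (by decide)
  obtain ⟨n203, h203⟩ := hint2 2 0 3 (by decide) (by decide) (by decide) (by decide)
  obtain ⟨n204, h204⟩ := hint2 2 0 4 (by decide) (by decide) (by decide) (by decide)
  obtain ⟨n031, h031⟩ := hint2 0 3 1 (by decide) (by decide) (by decide) (by decide)
  obtain ⟨n032, h032⟩ := hint2 0 3 2 (by decide) (by decide) (by decide) (by decide)
  obtain ⟨n034, h034⟩ := hint2 0 3 4 (by decide) (by decide) (by decide) (by decide)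
  obtain ⟨n130, h130⟩ := hint2 1 3 0 (by decide) (by decide) (by decide) (by decide)
  obtain ⟨n132, h132⟩ := hint2 1 3 2 (by decide) (by decide) (by decide) (by decide)
  obtain ⟨n134, h134⟩ := hint2 1 3 4 (by decide) (by decide) (by decide) (by decide)
  obtain ⟨n230, h230⟩ := hint2 2 3 0 (by decide) (by decide) (by decide) (by decide)
  obtain ⟨n231, h231⟩ := hint2 2 3 1 (by decide) (by decide) (by decide) (by decide)
  obtain ⟨n234, h234⟩ := hint2 2 3 4 (by decide) (by decide) (by decide) (by decide)
  obtain ⟨n041, h041⟩ := hint2 0 4 1 (by decide) (by decide) (by decide) (by decide)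
  obtain ⟨n042, h042⟩ := hint2 0 4 2 (by decide) (by decide) (by decide) (by decide)
  obtain ⟨n043, h043⟩ := hint2 0 4 3 (by decide) (by decide) (by decide) (by decide)
  obtain ⟨n140, h140⟩ := hint2 1 4 0 (by decide) (by decide) (by decide) (by decide)
  obtain ⟨n142, h142⟩ := hint2 1 4 2 (by decide) (by decide) (by decide) (by decide)
  obtain ⟨n143, h143⟩ := hint2 1 4 3 (by decide) (by decide) (by decide) (by decide)
  obtain ⟨n240, h240⟩ := hint2 2 4 0 (by decide) (by decide) (by decide) (by decide)
  obtain ⟨n241, h241⟩ := hint2 2 4 1 (by decide) (by decide) (by decide) (by decide)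
  obtain ⟨n243, h243⟩ := hint2 2 4 3 (by decide) (by decide) (by decide) (by decide)
  obtain ⟨e10, g10⟩ := hhalf 1 0 (by decide)
  obtain ⟨e20, g20⟩ := hhalf 2 0 (by decide)
  obtain ⟨e21, g21⟩ := hhalf 2 1 (by decide)
  obtain ⟨e30, g30⟩ := hhalf 3 0 (by decide)
  obtain ⟨e31, g31⟩ := hhalf 3 1 (by decide)
  obtain ⟨e32, g32⟩ := hhalf 3 2 (by decide)
  obtain ⟨e40, g40⟩ := hhalf 4 0 (by decide)
  obtain ⟨e41, g41⟩ := hhalf 4 1 (by decide)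
  obtain ⟨e42, g42⟩ := hhalf 4 2 (by decide)
  obtain ⟨e43, g43⟩ := hhalf 4 3 (by decide)
  have q0123 : -(1+2*e31)+(1+2*e21)+(1+2*e30)-(1+2*e20) + 2 * (n231 - n230 - n013 + n012) = 0 := by
    have h := key2 0 1 2 3 (by decide) (by decide) (by decide) (by decide) (by decide) (by decide) (by decide) (by decide)
    rw [h231, h230, h013, h012] at h
    have : (((-(1+2*e31)+(1+2*e21)+(1+2*e30)-(1+2*e20) + 2 * (n231 - n230 - n013 + n012) : ℤ)) : ℝ) = 0 := by
      push_cast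
      linarith [g20, g30, g21, g31]
    exact_mod_cast this
  have q0124 : -(1+2*e41)+(1+2*e21)+(1+2*e40)-(1+2*e20) + 2 * (n241 - n240 - n014 + n012) = 0 := by
    have h := key2 0 1 2 4 (by decide) (by decide) (by decide) (by decide) (by decide) (by decide) (by decide) (by decide)
    rw [h241, h240, h014, h012] at h
    have : (((-(1+2*e41)+(1+2*e21)+(1+2*e40)-(1+2*e20) + 2 * (n241 - n240 - n014 + n012) : ℤ)) : ℝ) = 0 := by
      push_cast
      linarith [g20, g40, g21, g41]
    exact_mod_cast this
  have q1203 : -(1+2*e32)-(1+2*e20)+(1+2*e31)+(1+2*e10) + 2 * (n032 - n031 - n123 + n120) = 0 := by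
    have h := key2 1 2 0 3 (by decide) (by decide) (by decide) (by decide) (by decide) (by decide) (by decide) (by decide)
    rw [h032, h031, h123, h120] at h
    have : (((-(1+2*e32)-(1+2*e20)+(1+2*e31)+(1+2*e10) + 2 * (n032 - n031 - n123 + n120) : ℤ)) : ℝ) = 0 := by
      push_cast
      linarith [g10, g31, g20, g32]
    exact_mod_cast this
  have q1204 : -(1+2*e42)-(1+2*e20)+(1+2*e41)+(1+2*e10) + 2 * (n042 - n041 - n124 + n120) = 0 := by
    have h := key2 1 2 0 4 (by decide) (by decide) (by decide) (by decide) (by decide) (by decide) (by decide) (by decide)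
    rw [h042, h041, h124, h120] at h
    have : (((-(1+2*e42)-(1+2*e20)+(1+2*e41)+(1+2*e10) + 2 * (n042 - n041 - n124 + n120) : ℤ)) : ℝ) = 0 := by
      push_cast
      linarith [g10, g41, g20, g42]
    exact_mod_cast this
  have q2013 : -(1+2*e30)+(1+2*e10)+(1+2*e32)+(1+2*e21) + 2 * (n130 - n132 - n203 + n201) = 0 := by
    have h := key2 2 0 1 3 (by decide) (by decide) (by decide) (by decide) (by decide) (by decide) (by decide) (by decide)
    rw [h130, h132, h203, h201] at h
    have : (((-(1+2*e30)+(1+2*e10)+(1+2*e32)+(1+2*e21) + 2 * (n130 - n132 - n203 + n201) : ℤ)) : ℝ) = 0 := by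
      push_cast
      linarith [g21, g32, g10, g30]
    exact_mod_cast this
  have q2014 : -(1+2*e40)+(1+2*e10)+(1+2*e42)+(1+2*e21) + 2 * (n140 - n142 - n204 + n201) = 0 := by
    have h := key2 2 0 1 4 (by decide) (by decide) (by decide) (by decide) (by decide) (by decide) (by decide) (by decide)
    rw [h140, h142, h204, h201] at h
    have : (((-(1+2*e40)+(1+2*e10)+(1+2*e42)+(1+2*e21) + 2 * (n140 - n142 - n204 + n201) : ℤ)) : ℝ) = 0 := by
      push_cast
      linarith [g21, g42, g10, g40]
    exact_mod_cast this
  have q0314 : -(1+2*e43)-(1+2*e31)+(1+2*e40)-(1+2*e10) + 2 * (n143 - n140 - n034 + n031) = 0 := by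
    have h := key2 0 3 1 4 (by decide) (by decide) (by decide) (by decide) (by decide) (by decide) (by decide) (by decide)
    rw [h143, h140, h034, h031] at h
    have : (((-(1+2*e43)-(1+2*e31)+(1+2*e40)-(1+2*e10) + 2 * (n143 - n140 - n034 + n031) : ℤ)) : ℝ) = 0 := by
      push_cast
      linarith [g10, g40, g31, g43]
    exact_mod_cast this
  have q0324 : -(1+2*e43)-(1+2*e32)+(1+2*e40)-(1+2*e20) + 2 * (n243 - n240 - n034 + n032) = 0 := by
    have h := key2 0 3 2 4 (by decide) (by decide) (by decide) (by decide) (by decide) (by decide) (by decide) (by decide)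
    rw [h243, h240, h034, h032] at h
    have : (((-(1+2*e43)-(1+2*e32)+(1+2*e40)-(1+2*e20) + 2 * (n243 - n240 - n034 + n032) : ℤ)) : ℝ) = 0 := by
      push_cast
      linarith [g20, g40, g32, g43]
    exact_mod_cast this
  have q1304 : -(1+2*e43)-(1+2*e30)+(1+2*e41)+(1+2*e10) + 2 * (n043 - n041 - n134 + n130) = 0 := by
    have h := key2 1 3 0 4 (by decide) (by decide) (by decide) (by decide) (by decide) (by decide) (by decide) (by decide)
    rw [h043, h041, h134, h130] at h
    have : (((-(1+2*e43)-(1+2*e30)+(1+2*e41)+(1+2*e10) + 2 * (n043 - n041 - n134 + n130) : ℤ)) : ℝ) = 0 := by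
      push_cast
      linarith [g10, g41, g30, g43]
    exact_mod_cast this
  have q1324 : -(1+2*e43)-(1+2*e32)+(1+2*e41)-(1+2*e21) + 2 * (n243 - n241 - n134 + n132) = 0 := by
    have h := key2 1 3 2 4 (by decide) (by decide) (by decide) (by decide) (by decide) (by decide) (by decide) (by decide)
    rw [h243, h241, h134, h132] at h
    have : (((-(1+2*e43)-(1+2*e32)+(1+2*e41)-(1+2*e21) + 2 * (n243 - n241 - n134 + n132) : ℤ)) : ℝ) = 0 := by
      push_cast
      linarith [g21, g41, g32, g43]
    exact_mod_cast this
  have q2304 : -(1+2*e43)-(1+2*e30)+(1+2*e42)+(1+2*e20) + 2 * (n043 - n042 - n234 + n230) = 0 := by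
    have h := key2 2 3 0 4 (by decide) (by decide) (by decide) (by decide) (by decide) (by decide) (by decide) (by decide)
    rw [h043, h042, h234, h230] at h
    have : (((-(1+2*e43)-(1+2*e30)+(1+2*e42)+(1+2*e20) + 2 * (n043 - n042 - n234 + n230) : ℤ)) : ℝ) = 0 := by
      push_cast
      linarith [g20, g42, g30, g43]
    exact_mod_cast this
  have q2314 : -(1+2*e43)-(1+2*e31)+(1+2*e42)+(1+2*e21) + 2 * (n143 - n142 - n234 + n231) = 0 := by
    have h := key2 2 3 1 4 (by decide) (by decide) (by decide) (by decide) (by decide) (by decide) (by decide) (by decide)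
    rw [h143, h142, h234, h231] at h
    have : (((-(1+2*e43)-(1+2*e31)+(1+2*e42)+(1+2*e21) + 2 * (n143 - n142 - n234 + n231) : ℤ)) : ℝ) = 0 := by
      push_cast
      linarith [g21, g42, g31, g43]
    exact_mod_cast this
  refine ⟨n013 + n123 + n203 - (n014 + n124 + n204), ?_, ?_⟩
  · rw [Int.odd_iff]
    clear key2 hint2 hhalf
    omega
  · rw [h013, h123, h203, h014, h124, h204]
    push_cast
    ring
end

section
/- Let f be an almost embedding of K₄ in the plane. Then wu_cyc(p₁₂, p₂₃, p₃₁) + wu_tri(p₄₁, p₄₂, p₄₃) = 2·w_f(123, 4), where wu_cyc(p₁₂, p₂₃, p₃₁) := 2·(w'(p₂₃, f₁) + w'(p₁₂, f₃) + w'(p₃₁, f₂)) is the cyclic Wu number, wu_tri(p₄₁, p₄₂, p₄₃) := 2·(w'(p̄₄₂p₄₃, f₁) + w'(p̄₄₁p₄₂, f₃) + w'(p̄₄₃p₄₁, f₂)) is the triodic Wu number (p̄ denoting the reverse of p and juxtaposition denoting concatenation), and w_f(123, 4) := w'(p₁₂, f₄) + w'(p₂₃, f₄) + w'(p₃₁,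 f₄). -/
lemma exists_rot (a b c d : ℂ) (h : Disjoint (segment ℝ a b) (segment ℝ c d)) :
    ∃ u : ℂ, u ≠ 0 ∧ ∀ x ∈ segment ℝ a b, ∀ y ∈ segment ℝ c d, 0 < (u * (y - x)).re := by
  have hc : ∀ a b : ℂ, IsCompact (segment ℝ a b) := fun a b => by
    rw [← convexHull_pair]
    exact (Set.toFinite _).isCompact_convexHull ℝ
  obtain ⟨g, u, v, h1, h2, h3⟩ := geometric_hahn_banach_compact_closed (convex_segment a b)
    (hc a b) (convex_segment c d) (hc c d).isClosed h
  have hg : ∀ z : ℂ, g z = ((⟨g 1, - g Complex.I⟩ : ℂ) * z).re := by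
    intro z
    have : z = (z.re : ℝ) • (1 : ℂ) + (z.im : ℝ) • Complex.I := by
      apply Complex.ext <;> simp
    conv_lhs => rw [this]
    rw [map_add, map_smul, map_smul]
    simp
    ring
  have key : ∀ x ∈ segment ℝ a b, ∀ y ∈ segment ℝ c d,
      0 < ((⟨g 1, - g Complex.I⟩ : ℂ) * (y - x)).re := by
    intro x hx y hy
    rw [← hg, map_sub]
    linarith [h1 x hx, h3 y hy]
  refine ⟨_, ?_, key⟩
  intro h0
  have := key a (left_mem_segment ℝ a b) c (left_mem_segment ℝ c d)
  rw [h0] at this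
  simp at this

lemma arg_div_rot (u z w : ℂ) (hu : u ≠ 0) (hz : 0 < (u * z).re) (hw : 0 < (u * w).re) :
    Complex.arg (z / w) = Complex.arg (u * z) - Complex.arg (u * w) := by
  have e : z / w = (u * z) / (u * w) := by rw [mul_div_mul_left _ _ hu]
  have hz0 : u * z ≠ 0 := by intro h; rw [h] at hz; simp at hz
  have hw0 : u * w ≠ 0 := by intro h; rw [h] at hw; simp at hw
  have h1 := abs_lt.1 (Complex.abs_arg_lt_pi_div_two_iff.2 (Or.inl hz))
  have h2 := abs_lt.1 (Complex.abs_arg_lt_pi_div_two_iff.2 (Or.inl hw))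
  have hi : Complex.arg (u * w)⁻¹ = - Complex.arg (u * w) := by
    rw [Complex.arg_inv, if_neg]
    linarith [Real.pi_pos]
  rw [e, div_eq_mul_inv, Complex.arg_mul hz0 (inv_ne_zero hw0), hi, sub_eq_add_neg]
  rw [hi]
  constructor <;> linarith

lemma seg_seg (a b c d : ℂ) (h : Disjoint (segment ℝ a b) (segment ℝ c d)) :
    Complex.arg ((d - a) / (c - a)) - Complex.arg ((d - b) / (c - b)) =
      Complex.arg ((b - c) / (a - c)) - Complex.arg ((b - d) / (a - d)) := by
  obtain ⟨u, hu, H⟩ := exists_rot a b c d h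
  have ha := left_mem_segment ℝ a b
  have hb := right_mem_segment ℝ a b
  have hc := left_mem_segment ℝ c d
  have hd := right_mem_segment ℝ c d
  have e1 : (b - c) / (a - c) = (c - b) / (c - a) := by
    rw [← neg_sub c b, ← neg_sub c a, neg_div_neg_eq]
  have e2 : (b - d) / (a - d) = (d - b) / (d - a) := by
    rw [← neg_sub d b, ← neg_sub d a, neg_div_neg_eq]
  rw [e1, e2, arg_div_rot u _ _ hu (H a ha d hd) (H a ha c hc),
    arg_div_rot u _ _ hu (H b hb d hd) (H b hb c hc),
    arg_div_rot u _ _ hu (H b hb c hc) (H a ha c hc),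
    arg_div_rot u _ _ hu (H b hb d hd) (H a ha d hd)]
  ring

lemma arg_swap (O a b : ℂ) (h : O ∉ segment ℝ a b) :
    Complex.arg ((a - O) / (b - O)) = - Complex.arg ((b - O) / (a - O)) := by
  have hO : O ∈ segment ℝ O O := left_mem_segment ℝ O O
  obtain ⟨u, hu, H⟩ := exists_rot O O a b (by simpa [segment_same] using h)
  have ha := H O hO a (left_mem_segment ℝ a b)
  have hb := H O hO b (right_mem_segment ℝ a b)
  rw [arg_div_rot u _ _ hu ha hb, arg_div_rot u _ _ hu hb ha]
  ring

lemma seg_list (a b : ℂ) : ∀ (q : List ℂ) (c : ℂ),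
    Disjoint (segment ℝ a b) (imagePL (c :: q)) →
    angSum a (c :: q) - angSum b (c :: q) =
      Complex.arg ((b - c) / (a - c)) -
      Complex.arg ((b - (c :: q).getLast (List.cons_ne_nil _ _)) /
        (a - (c :: q).getLast (List.cons_ne_nil _ _)))
  | [], c, _ => by simp [angSum]
  | d :: r, c, h => by
    rw [imagePL, Set.disjoint_union_right] at h
    have ih := seg_list a b r d h.2
    have s := seg_seg a b c d h.1
    rw [List.getLast_cons (List.cons_ne_nil d r)]
    simp only [angSum] at ih ⊢
    linarith

lemma list_list (q : List ℂ) (c : ℂ) : ∀ (p : List ℂ) (a : ℂ),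
    Disjoint (imagePL (a :: p)) (imagePL (c :: q)) →
    angSum a (c :: q) - angSum ((a :: p).getLast (List.cons_ne_nil _ _)) (c :: q) =
      angSum c (a :: p) - angSum ((c :: q).getLast (List.cons_ne_nil _ _)) (a :: p)
  | [], a, _ => by simp [angSum]
  | b :: r, a, h => by
    rw [imagePL, Set.disjoint_union_left] at h
    have ih := list_list q c r b h.2
    have s := seg_list a b q c h.1
    rw [List.getLast_cons (List.cons_ne_nil b r)]
    simp only [angSum] at ih ⊢
    linarith

lemma list_list' (p q : List ℂ) (a b c d : ℂ) (hp : p ≠ []) (hq : q ≠ [])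
    (ha : p.headI = a) (hb : p.getLast hp = b) (hc : q.headI = c) (hd : q.getLast hq = d)
    (h : Disjoint (imagePL p) (imagePL q)) :
    angSum a q - angSum b q = angSum c p - angSum d p := by
  subst hb hd
  cases p with
  | nil => exact absurd rfl hp
  | cons x p =>
    cases q with
    | nil => exact absurd rfl hq
    | cons y q =>
      simp only [List.headI] at ha hc
      subst ha hc
      exact list_list q y p x h

lemma angSum_append (O b : ℂ) (m : List ℂ) : ∀ l : List ℂ,
    angSum O (l ++ b :: m) = angSum O (l ++ [b]) + angSum O (b :: m)
  | [] => by simp [angSum]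
  | [x] => by simp [angSum]
  | x :: y :: r => by
    have := angSum_append O b m (y :: r)
    simp only [List.cons_append, angSum] at this ⊢
    linarith

lemma angSum_reverse (O : ℂ) : ∀ l : List ℂ, O ∉ imagePL l →
    angSum O l.reverse = - angSum O l
  | [], _ => by simp [angSum]
  | [x], _ => by simp [angSum]
  | x :: y :: r, h => by
    rw [imagePL, Set.mem_union, not_or] at h
    have ih := angSum_reverse O (y :: r) h.2
    have s := arg_swap O x y h.1
    have e : (x :: y :: r).reverse = r.reverse ++ y :: [x] := by simp
    rw [e, angSum_append]
    rw [List.reverse_cons] at ih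
    simp only [angSum] at ih ⊢
    linarith

lemma angSum_concat (O b : ℂ) (l m : List ℂ) (hl : l ≠ []) (hm : m ≠ [])
    (h1 : l.getLast hl = b) (h2 : m.headI = b) :
    angSum O (l ++ m) = angSum O l + angSum O m := by
  cases m with
  | nil => exact absurd rfl hm
  | cons y m =>
    simp only [List.headI] at h2
    subst h2
    have e : l = l.dropLast ++ [y] := by
      rw [← h1]; exact (List.dropLast_append_getLast hl).symm
    have e2 : l ++ y :: m = l.dropLast ++ y :: y :: m := by
      conv_lhs => rw [e]
      simp
    rw [e2, angSum_append, ← e]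
    have : Complex.arg ((y - O) / (y - O)) = 0 := by
      by_cases h : y - O = 0
      · simp [h]
      · simp [div_self h]
    simp only [angSum, this, zero_add]

/-- Let `f` be an almost embedding of `K₄` in the plane (four pairwise
distinct points `f 0, f 1, f 2, f 3`, a polygonal line `p i j` joining `f i` to `f j`
for each edge `{i,j}` with `p j i` the reverse of `p i j`, images of non-adjacent edges
disjoint, and `f l` not on the image of any edge `{i,j}` with `l ∉ {i,j}`). Then
`wu_cyc(p₁₂, p₂₃, p₃₁) + wu_tri(p₄₁, p₄₂, p₄₃) = 2·w_f(123, 4)`, where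
`wu_cyc(p₁₂, p₂₃, p₃₁) := 2·(w'(p₂₃, f₁) + w'(p₁₂, f₃) + w'(p₃₁, f₂))`,
`wu_tri(p₄₁, p₄₂, p₄₃) := 2·(w'(p̄₄₂p₄₃, f₁) + w'(p̄₄₁p₄₂, f₃) + w'(p̄₄₃p₄₁, f₂))`,
and `w_f(123, 4) := w'(p₁₂, f₄) + w'(p₂₃, f₄) + w'(p₃₁, f₄)`
(vertices `1,2,3,4` are encoded as `0,1,2,3 : Fin 4`). -/
theorem cyclic_add_triodic_wu_eq_two_winding_K4 (f : Fin 4 → ℂ)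
    (p : Fin 4 → Fin 4 → List ℂ)
    (hinj : Function.Injective f)
    (hne : ∀ i j, i ≠ j → p i j ≠ [])
    (hjoin : ∀ i j, ∀ h : i ≠ j,
      (p i j).headI = f i ∧ (p i j).getLast (hne i j h) = f j)
    (hsym : ∀ i j, p j i = (p i j).reverse)
    (hdisj : ∀ i j k l : Fin 4, i ≠ j → k ≠ l → i ≠ k → i ≠ l → j ≠ k → j ≠ l →
      Disjoint (imagePL (p i j)) (imagePL (p k l)))
    (hvert : ∀ i j l : Fin 4, i ≠ j → l ≠ i → l ≠ j → f l ∉ imagePL (p i j)) :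
    2 * (wp (f 0) (p 1 2) + wp (f 2) (p 0 1) + wp (f 1) (p 2 0)) +
      2 * (wp (f 0) ((p 3 1).reverse ++ p 3 2) + wp (f 2) ((p 3 0).reverse ++ p 3 1) +
        wp (f 1) ((p 3 2).reverse ++ p 3 0)) =
      2 * (wp (f 3) (p 0 1) + wp (f 3) (p 1 2) + wp (f 3) (p 2 0)) := by
  have hK : ∀ i j k l : Fin 4, i ≠ j → k ≠ l → i ≠ k → i ≠ l → j ≠ k → j ≠ l →
      angSum (f i) (p k l) - angSum (f j) (p k l) =
        angSum (f k) (p i j) - angSum (f l) (p i j) := by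
    intro i j k l hij hkl h1 h2 h3 h4
    exact list_list' _ _ _ _ _ _ (hne i j hij) (hne k l hkl) (hjoin i j hij).1 (hjoin i j hij).2
      (hjoin k l hkl).1 (hjoin k l hkl).2 (hdisj i j k l hij hkl h1 h2 h3 h4)
  have hR : ∀ i j l : Fin 4, i ≠ j → l ≠ i → l ≠ j →
      angSum (f l) (p j i) = - angSum (f l) (p i j) := by
    intro i j l hij h1 h2
    rw [hsym i j]
    exact angSum_reverse _ _ (hvert i j l hij h1 h2)
  have hC : ∀ i j k l : Fin 4, i ≠ j → j ≠ k →
      angSum (f l) (p i j ++ p j k) = angSum (f l) (p i j) + angSum (f l) (p j k) := by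
    intro i j k l hij hjk
    exact angSum_concat _ (f j) _ _ (hne i j hij) (hne j k hjk) (hjoin i j hij).2 (hjoin j k hjk).1
  rw [← hsym 3 1, ← hsym 3 0, ← hsym 3 2]
  simp only [wp]
  rw [hC 1 3 2 0 (by decide) (by decide), hC 0 3 1 2 (by decide) (by decide),
    hC 2 3 0 1 (by decide) (by decide), hR 3 1 0 (by decide) (by decide) (by decide),
    hR 3 0 2 (by decide) (by decide) (by decide), hR 3 2 1 (by decide) (by decide) (by decide)]
  have k1 := hK 0 1 3 2 (by decide) (by decide) (by decide) (by decide) (by decide) (by decide)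
  have k2 := hK 2 0 3 1 (by decide) (by decide) (by decide) (by decide) (by decide) (by decide)
  have k3 := hK 1 2 3 0 (by decide) (by decide) (by decide) (by decide) (by decide) (by decide)
  simp only [div_eq_mul_inv]
  linear_combination 2 * (2 * Real.pi)⁻¹ * (k1 + k2 + k3)
end
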